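/- Let T be a set of four affinely independent points in ℕ_0^3. Then for every α ∈ T there exists a point β ∈ E_2^∞(T) with β ≠ α such that all three coordinates of β − α are positive integers. -/

import Mathlib

open MeasureTheory
open scoped Classical ENNReal

noncomputable section

/-- The `d`-dimensional torus, modelled as `d` copies of `ℝ/ℤ`,
whose product `volume` measure is the normalized Haar measure. -/
abbrev Torus (d : ℕ) := Fin d → AddCircle (1 : ℝ)

/-- The character `z ↦ z^α` on the torus. -/
def torusChar {d : ℕ} (α : Fin d → ℤ) (x : Torus d) : ℂ :=
  ∏ j, fourier (α j) (x j)

/-- The trigonometric polynomial with frequencies in `F` and coefficients `a`. -/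
def trigPoly {d : ℕ} (F : Finset (Fin d → ℤ)) (a : (Fin d → ℤ) → ℂ) (x : Torus d) : ℂ :=
  ∑ α ∈ F, a α * torusChar α x

/-- The set `ℕ₀^d` of multi-indices with nonnegative entries. -/
def NN (d : ℕ) : Set (Fin d → ℤ) := {α | ∀ j, 0 ≤ α j}

/-- `Λ` is a coset in `ℤ^d`, i.e. a translate of a subgroup. -/
def IsCoset {d : ℕ} (Λ : Set (Fin d → ℤ)) : Prop :=
  ∃ (x : Fin d → ℤ) (H : AddSubgroup (Fin d → ℤ)),
    Λ = (x + ·) '' (H : Set (Fin d → ℤ))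

/-- `Λ` is a contractive projection set for `L^p(𝕋^d)`:
the projection onto frequencies in `Λ` is contractive on trigonometric polynomials. -/
def IsContractiveLp (d : ℕ) (p : ℝ≥0∞) (Λ : Set (Fin d → ℤ)) : Prop :=
  ∀ (F : Finset (Fin d → ℤ)) (a : (Fin d → ℤ) → ℂ),
    eLpNorm (trigPoly (F.filter (· ∈ Λ)) a) p volume ≤ eLpNorm (trigPoly F a) p volume

/-- `Γ` is a contractive projection set for `H^p(𝕋^d)`:
the projection onto frequencies in `Γ` is contractive on analytic polynomials. -/
def IsContractiveHp (d : ℕ) (p : ℝ≥0∞) (Γ : Set (Fin d → ℤ)) : Prop :=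
  ∀ F : Finset (Fin d → ℤ), ↑F ⊆ NN d → ∀ a : (Fin d → ℤ) → ℂ,
    eLpNorm (trigPoly (F.filter (· ∈ Γ)) a) p volume ≤ eLpNorm (trigPoly F a) p volume

/-- `Γ` has dimension `k`: the subgroup generated by the differences `γ - γ₀` has rank `k`. -/
def HasDim {d : ℕ} (Γ : Set (Fin d → ℤ)) (k : ℕ) : Prop :=
  ∀ γ₀ ∈ Γ, Module.finrank ℤ (Submodule.span ℤ ((· - γ₀) '' Γ)) = k

/-- `H^p(𝕋^d)` enjoys the contractive restriction property of dimension `k`: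
every `k`-dimensional contractive projection set for `H^p(𝕋^d)` is the restriction
of a coset in `ℤ^d` to `ℕ₀^d`. -/
def ContractiveRestrictionProperty (d : ℕ) (p : ℝ≥0∞) (k : ℕ) : Prop :=
  ∀ Γ : Set (Fin d → ℤ), Γ.Nonempty → Γ ⊆ NN d → HasDim Γ k → IsContractiveHp d p Γ →
    ∃ Λ : Set (Fin d → ℤ), IsCoset Λ ∧ Γ = Λ ∩ NN d

/-- The coset `Λ(Γ)` in `ℤ^d` generated by `Γ`. -/
def cosetGen {d : ℕ} (Γ : Set (Fin d → ℤ)) : Set (Fin d → ℤ) :=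
  ⋃ γ₀ ∈ Γ, (γ₀ + ·) '' (AddSubgroup.closure ((· - γ₀) '' Γ) : Set (Fin d → ℤ))

/-- The `n`-extension `E_n(Γ)`: all points of `Λ(Γ) ∩ ℕ₀^d` at distance at most `n` from `Γ`. -/
def Eext {d : ℕ} (n : ℕ) (Γ : Set (Fin d → ℤ)) : Set (Fin d → ℤ) :=
  {lam | lam ∈ cosetGen Γ ∩ NN d ∧ ∃ γ ∈ Γ, ∃ m : (Fin d → ℤ) →₀ ℤ,
    (↑m.support : Set (Fin d → ℤ)) ⊆ Γ \ {γ} ∧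
    lam = γ + ∑ α ∈ m.support, m α • (α - γ) ∧
    (∑ α ∈ m.support, max (m α) 0) ≤ (n : ℤ) ∧
    (∑ α ∈ m.support, max (-(m α)) 0) ≤ (n : ℤ)}

/-- Iterated `n`-extensions `E_n^k(Γ)`. -/
def EextIter {d : ℕ} (n : ℕ) : ℕ → Set (Fin d → ℤ) → Set (Fin d → ℤ)
  | 0, Γ => Eext n Γ
  | (k + 1), Γ => Eext n (EextIter n k Γ)

/-- The `n`-completion `E_n^∞(Γ)`. -/
def EextInf {d : ℕ} (n : ℕ) (Γ : Set (Fin d → ℤ)) : Set (Fin d → ℤ) :=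
  ⋃ k, EextIter n k Γ


theorem pair_sum_bound {ι : Type} [DecidableEq ι] (s : Finset ι) (f : ι → ℤ) (c : ℤ)
    (hs : 2 ≤ s.card) (h : ∀ i ∈ s, ∀ i' ∈ s, i ≠ i' → f i + f i' ≤ c) :
    2 * ∑ i ∈ s, f i ≤ s.card * c := by
  have hne : s.Nonempty := Finset.card_pos.mp (by omega)
  obtain ⟨p, hp, hpm⟩ := s.exists_max_image f hne
  have hne2 : (s.erase p).Nonempty := Finset.card_pos.mp (by
    rw [Finset.card_erase_of_mem hp]; omega)
  obtain ⟨q, hq⟩ := hne2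
  have e1 := Finset.add_sum_erase s f hp
  have e2 := Finset.add_sum_erase (s.erase p) f hq
  have hq' := Finset.mem_erase.mp hq
  have b : ∑ i ∈ (s.erase p).erase q, (2 * f i) ≤ ((s.erase p).erase q).card • c := by
    apply Finset.sum_le_card_nsmul
    intro i hi
    simp only [Finset.mem_erase] at hi
    have := h i hi.2.2 p hp hi.2.1
    have := hpm i hi.2.2
    linarith
  rw [Finset.card_erase_of_mem hq, Finset.card_erase_of_mem hp, ← Finset.mul_sum, nsmul_eq_mul] at b
  have hpq := h p hp q hq'.2 (Ne.symm hq'.1)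
  have : ((s.card - 1 - 1 : ℕ) : ℤ) = s.card - 2 := by omega
  rw [this] at b
  nlinarith

/-- one half of the planar lemma -/
theorem half_case {ι : Type} [DecidableEq ι] (s t A : Finset ι) (x y : ι → ℤ)
    (hA : A ⊆ t) (hs : 2 ≤ s.card) (h2 : s.card ≤ 2 * A.card)
    (hx : ∀ i ∈ s, 0 ≤ x i) (hy : ∀ j ∈ t, 0 ≤ y j) (hsum : ∑ j ∈ t, y j ≤ ∑ i ∈ s, x i)
    (h : ∀ i ∈ s, ∀ i' ∈ s, i ≠ i' → ∀ j ∈ A, x i + x i' < y j) : False := by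
  have hne : A.Nonempty := Finset.card_pos.mp (by omega)
  obtain ⟨j, hj, hjm⟩ := A.exists_min_image y hne
  have b := pair_sum_bound s x (y j - 1) hs (fun i hi i' hi' hne => by
    have := h i hi i' hi' hne j hj
    omega)
  have c : A.card • y j ≤ ∑ j ∈ A, y j := Finset.card_nsmul_le_sum _ _ _ hjm
  have d : ∑ j ∈ A, y j ≤ ∑ j ∈ t, y j :=
    Finset.sum_le_sum_of_subset_of_nonneg hA (fun j hj _ => hy j hj)
  rw [nsmul_eq_mul] at c
  obtain ⟨p, hp, q, hq, hpq⟩ := Finset.one_lt_card.mp hs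
  have e := h p hp q hq hpq j hj
  have := hx p hp
  have := hx q hq
  have h2' : (s.card : ℤ) ≤ 2 * A.card := by exact_mod_cast h2
  have hs' : (2 : ℤ) ≤ s.card := by exact_mod_cast hs
  nlinarith

theorem planar {ι : Type} [DecidableEq ι] (n : ℕ) : ∀ (s t : Finset ι) (x1 x2 y1 y2 : ι → ℤ),
    s.card = n + 2 → t.card = n + 2 →
    (∀ i ∈ s, 0 ≤ x1 i ∧ 0 ≤ x2 i) → (∀ j ∈ t, 0 ≤ y1 j ∧ 0 ≤ y2 j) →
    ∑ j ∈ t, y1 j ≤ ∑ i ∈ s, x1 i → ∑ j ∈ t, y2 j ≤ ∑ i ∈ s, x2 i →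
    (∀ i ∈ s, ∀ i' ∈ s, i ≠ i' → ∀ j ∈ t, x1 i + x1 i' < y1 j ∨ x2 i + x2 i' < y2 j) →
    False := by
  induction n with
  | zero =>
    intro s t x1 x2 y1 y2 hs ht hx hy h1 h2 h
    obtain ⟨i, i', hne, rfl⟩ := Finset.card_eq_two.mp hs
    obtain ⟨j, j', hne', rfl⟩ := Finset.card_eq_two.mp ht
    rw [Finset.sum_pair hne, Finset.sum_pair hne'] at h1 h2
    have := h i (by simp) i' (by simp) hne j (by simp)
    have := hy j' (by simp)
    omega
  | succ n ih =>
    intro s t x1 x2 y1 y2 hs ht hx hy h1 h2 h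
    by_cases hc : ∃ i ∈ s, ∃ j ∈ t, x1 i ≤ y1 j ∧ x2 i ≤ y2 j
    · obtain ⟨i, hi, j, hj, h3, h4⟩ := hc
      refine ih (s.erase i) (t.erase j) x1 x2 y1 y2 ?_ ?_ ?_ ?_ ?_ ?_ ?_
      · rw [Finset.card_erase_of_mem hi]; omega
      · rw [Finset.card_erase_of_mem hj]; omega
      · exact fun k hk => hx k (Finset.mem_of_mem_erase hk)
      · exact fun k hk => hy k (Finset.mem_of_mem_erase hk)
      · have := Finset.add_sum_erase s x1 hi
        have := Finset.add_sum_erase t y1 hj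
        linarith
      · have := Finset.add_sum_erase s x2 hi
        have := Finset.add_sum_erase t y2 hj
        linarith
      · exact fun k hk k' hk' hkk l hl => h k (Finset.mem_of_mem_erase hk) k'
          (Finset.mem_of_mem_erase hk') hkk l (Finset.mem_of_mem_erase hl)
    · push Not at hc
      -- every `y` is to the right of all `x`, or to the left of all `x`
      have key : ∀ j ∈ t, (∀ i ∈ s, y2 j < x2 i) ∨ (∀ i ∈ s, y1 j < x1 i) := by
        intro j hj
        by_contra hcon
        push Not at hcon
        obtain ⟨⟨i, hi, hi2⟩, ⟨i', hi', hi2'⟩⟩ := hcon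
        have a1 := hc i hi j hj
        have a2 := hc i' hi' j hj
        have b1 := hx i hi
        have b2 := hx i' hi'
        have hne : i ≠ i' := by
          rintro rfl
          have := a1 hi2'
          omega
        have := h i hi i' hi' hne j hj
        have := a2 hi2'
        have : y1 j < x1 i := by
          by_contra hh
          have := a1 (by omega)
          omega
        omega
      let A := t.filter (fun j => ∀ i ∈ s, y2 j < x2 i)
      let B := t.filter (fun j => ¬ ∀ i ∈ s, y2 j < x2 i)
      have hAB : A.card + B.card = t.card := Finset.card_filter_add_card_filter_not _
      by_cases hcard : s.card ≤ 2 * A.card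
      · refine half_case s t A x1 y1 (Finset.filter_subset _ _) (by omega) hcard
          (fun i hi => (hx i hi).1) (fun i hi => (hy i hi).1) h1 ?_
        intro i hi i' hi' hne j hj
        have hj' := Finset.mem_filter.mp hj
        have a1 := hj'.2 i hi
        have := hx i' hi'
        have := h i hi i' hi' hne j hj'.1
        omega
      · refine half_case s t B x2 y2 (Finset.filter_subset _ _) (by omega) (by omega)
          (fun i hi => (hx i hi).2) (fun i hi => (hy i hi).2) h2 ?_
        intro i hi i' hi' hne j hj
        have hj' := Finset.mem_filter.mp hj
        have a1 := ((key j hj'.1).resolve_left hj'.2) i hi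
        have := hx i' hi'
        have := h i hi i' hi' hne j hj'.1
        omega

/-- the key lemma -/
theorem dominate {ι : Type} [DecidableEq ι] (s t : Finset ι) (a1 a2 a3 b1 b2 b3 : ι → ℤ)
    (hs : 2 ≤ s.card)
    (ha : ∀ i ∈ s, 0 ≤ a1 i ∧ 0 ≤ a2 i ∧ 0 ≤ a3 i)
    (H1 : ∀ i ∈ s, ∀ i' ∈ s, i ≠ i' → ∀ j ∈ t,
      a1 i + a1 i' < b1 j ∨ a2 i + a2 i' < b2 j ∨ a3 i + a3 i' < b3 j)
    (H2 : ∀ i ∈ t, ∀ i' ∈ t, i ≠ i' → ∀ j ∈ s,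
      b1 i + b1 i' < a1 j ∨ b2 i + b2 i' < a2 j ∨ b3 i + b3 i' < a3 j)
    (H3 : ∀ i ∈ s, ∀ i' ∈ s, ∀ i'' ∈ s, i ≠ i' → i ≠ i'' → i' ≠ i'' → ∀ j ∈ t, ∀ j' ∈ t, j ≠ j' →
      a1 i + a1 i' + a1 i'' < b1 j + b1 j' ∨ a2 i + a2 i' + a2 i'' < b2 j + b2 j' ∨
      a3 i + a3 i' + a3 i'' < b3 j + b3 j')
    (p q r : ι) (hp : p ∈ s) (hq : q ∈ s) (hr : r ∈ s)
    (hpb : ∀ j ∈ t, b1 j ≤ a1 p)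
    (hqb : ∀ j ∈ t, b2 j ≤ a2 q) :
    (∃ i ∈ s, ∃ i' ∈ s, i ≠ i' ∧ ∀ j ∈ t, a3 i + a3 i' < b3 j) ∧
    ∀ j ∈ t, ∀ j' ∈ t, j ≠ j' → a3 r < b3 j ∨ a3 r < b3 j' := by
  by_cases hpq : p = q
  · subst hpq
    have key : ∀ i ∈ s, i ≠ p → ∀ j ∈ t, a3 p + a3 i < b3 j := by
      intro i hi hne j hj
      have := H1 p hp i hi (Ne.symm hne) j hj
      have := ha i hi
      have := hpb j hj
      have := hqb j hj
      omega
    obtain ⟨i, hi, hne⟩ := Finset.exists_mem_ne (show 1 < s.card by omega) p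
    refine ⟨⟨p, hp, i, hi, Ne.symm hne, key i hi hne⟩, ?_⟩
    intro j hj j' hj' hjj
    left
    have hap := ha p hp
    by_cases hrp : r = p
    · subst hrp
      have := key i hi hne j hj
      have := ha i hi
      omega
    · have := key r hr hrp j hj
      omega
  · have key : ∀ j ∈ t, a3 p + a3 q < b3 j := by
      intro j hj
      have := H1 p hp q hq hpq j hj
      have := ha p hp
      have := ha q hq
      have := hpb j hj
      have := hqb j hj
      omega
    refine ⟨⟨p, hp, q, hq, hpq, key⟩, ?_⟩
    intro j hj j' hj' hjj
    by_contra hcon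
    push Not at hcon
    obtain ⟨c, c'⟩ := hcon
    have hap := ha p hp
    have haq := ha q hq
    have har := ha r hr
    have k1 := key j hj
    have k2 := key j' hj'
    have hrp : r ≠ p := by
      rintro rfl
      omega
    have hrq : r ≠ q := by
      rintro rfl
      omega
    have e1 := H1 p hp r hr (Ne.symm hrp) j hj
    have e2 := H1 p hp r hr (Ne.symm hrp) j' hj'
    have e3 := H1 q hq r hr (Ne.symm hrq) j hj
    have e4 := H1 q hq r hr (Ne.symm hrq) j' hj'
    have f1 := hpb j hj
    have f2 := hpb j' hj'
    have f3 := hqb j hj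
    have f4 := hqb j' hj'
    have g1 : a2 p + a2 r < b2 j := by omega
    have g2 : a2 p + a2 r < b2 j' := by omega
    have g3 : a1 q + a1 r < b1 j := by omega
    have g4 : a1 q + a1 r < b1 j' := by omega
    have m1 := H2 j hj j' hj' hjj p hp
    have m2 := H2 j hj j' hj' hjj q hq
    have m3 := H2 j hj j' hj' hjj r hr
    have m4 := H3 p hp q hq r hr hpq (Ne.symm hrp) (Ne.symm hrq) j hj j' hj' hjj
    clear e1 e2 e3 e4
    omega

theorem sum_case {ι : Type} [DecidableEq ι] (s t : Finset ι) (a b : ι → ℤ)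
    (hs : 2 ≤ s.card) (hst : s.card = t.card) (hsum : ∑ j ∈ t, b j ≤ ∑ i ∈ s, a i)
    (r : ι) (hr0 : 0 ≤ a r) (hra : ∀ j ∈ s, a j ≤ a r)
    (h1 : ∃ i ∈ s, ∃ i' ∈ s, i ≠ i' ∧ ∀ j ∈ t, a i + a i' < b j)
    (h2 : ∀ j ∈ t, ∀ j' ∈ t, j ≠ j' → a r < b j ∨ a r < b j') : False := by
  obtain ⟨i, hi, i', hi', hne, h⟩ := h1
  have htne : t.Nonempty := Finset.card_pos.mp (by omega)
  obtain ⟨j0, hj0, hmin⟩ := t.exists_min_image b htne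
  have e1 := Finset.add_sum_erase t b hj0
  have b1 : (t.erase j0).card • (a r) ≤ ∑ j ∈ t.erase j0, b j := by
    apply Finset.card_nsmul_le_sum
    intro j hj
    have hj' := Finset.mem_erase.mp hj
    have := h2 j hj'.2 j0 hj0 hj'.1
    have := hmin j hj'.2
    omega
  have hi2 : i' ∈ s.erase i := Finset.mem_erase.mpr ⟨Ne.symm hne, hi'⟩
  have e2 := Finset.add_sum_erase s a hi
  have e3 := Finset.add_sum_erase (s.erase i) a hi2
  have b2 : ∑ j ∈ (s.erase i).erase i', a j ≤ ((s.erase i).erase i').card • (a r) := by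
    apply Finset.sum_le_card_nsmul
    intro j hj
    exact hra j (Finset.mem_of_mem_erase (Finset.mem_of_mem_erase hj))
  rw [Finset.card_erase_of_mem hi2, Finset.card_erase_of_mem hi, nsmul_eq_mul] at b2
  rw [Finset.card_erase_of_mem hj0, nsmul_eq_mul, ← hst] at b1
  have c1 : ((s.card - 1 - 1 : ℕ) : ℤ) = s.card - 2 := by omega
  have c2 : ((s.card - 1 : ℕ) : ℤ) = s.card - 1 := by omega
  rw [c1] at b2
  rw [c2] at b1
  have := h j0 hj0
  have e1a := hra i hi
  have e1b := hra i' hi'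
  nlinarith

/-- No merge is possible between the families `a` (indexed by `s`) and `b` (indexed by `t`). -/
structure NoMerge {ι : Type} (s t : Finset ι) (a1 a2 a3 b1 b2 b3 : ι → ℤ) : Prop where
  ha : ∀ i ∈ s, 0 ≤ a1 i ∧ 0 ≤ a2 i ∧ 0 ≤ a3 i
  hb : ∀ i ∈ t, 0 ≤ b1 i ∧ 0 ≤ b2 i ∧ 0 ≤ b3 i
  H1 : ∀ i ∈ s, ∀ i' ∈ s, i ≠ i' → ∀ j ∈ t,
      a1 i + a1 i' < b1 j ∨ a2 i + a2 i' < b2 j ∨ a3 i + a3 i' < b3 j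
  H2 : ∀ i ∈ t, ∀ i' ∈ t, i ≠ i' → ∀ j ∈ s,
      b1 i + b1 i' < a1 j ∨ b2 i + b2 i' < a2 j ∨ b3 i + b3 i' < a3 j
  H3 : ∀ i ∈ s, ∀ i' ∈ s, ∀ i'' ∈ s, i ≠ i' → i ≠ i'' → i' ≠ i'' → ∀ j ∈ t, ∀ j' ∈ t, j ≠ j' →
      a1 i + a1 i' + a1 i'' < b1 j + b1 j' ∨ a2 i + a2 i' + a2 i'' < b2 j + b2 j' ∨
      a3 i + a3 i' + a3 i'' < b3 j + b3 j'
  H4 : ∀ i ∈ t, ∀ i' ∈ t, ∀ i'' ∈ t, i ≠ i' → i ≠ i'' → i' ≠ i'' → ∀ j ∈ s, ∀ j' ∈ s, j ≠ j' →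
      b1 i + b1 i' + b1 i'' < a1 j + a1 j' ∨ b2 i + b2 i' + b2 i'' < a2 j + a2 j' ∨
      b3 i + b3 i' + b3 i'' < a3 j + a3 j'

theorem NoMerge.rot {ι : Type} {s t : Finset ι} {a1 a2 a3 b1 b2 b3 : ι → ℤ}
    (h : NoMerge s t a1 a2 a3 b1 b2 b3) : NoMerge s t a2 a3 a1 b2 b3 b1 := by
  refine ⟨?_, ?_, ?_, ?_, ?_, ?_⟩
  · intro i hi
    have := h.ha i hi
    tauto
  · intro i hi
    have := h.hb i hi
    tauto
  · intro i hi i' hi' hn j hj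
    have := h.H1 i hi i' hi' hn j hj
    tauto
  · intro i hi i' hi' hn j hj
    have := h.H2 i hi i' hi' hn j hj
    tauto
  · intro i hi i' hi' i'' hi'' n1 n2 n3 j hj j' hj' n4
    have := h.H3 i hi i' hi' i'' hi'' n1 n2 n3 j hj j' hj' n4
    tauto
  · intro i hi i' hi' i'' hi'' n1 n2 n3 j hj j' hj' n4
    have := h.H4 i hi i' hi' i'' hi'' n1 n2 n3 j hj j' hj' n4
    tauto

theorem NoMerge.two_coords {ι : Type} [DecidableEq ι] {s t : Finset ι}
    {a1 a2 a3 b1 b2 b3 : ι → ℤ}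
    (h : NoMerge s t a1 a2 a3 b1 b2 b3) (hs : 2 ≤ s.card) (hst : s.card = t.card)
    (s1 : ∑ j ∈ t, b1 j ≤ ∑ i ∈ s, a1 i)
    (s2 : ∑ j ∈ t, b2 j ≤ ∑ i ∈ s, a2 i)
    (s3 : ∑ j ∈ t, b3 j ≤ ∑ i ∈ s, a3 i)
    (hd : ((∃ p ∈ s, ∀ j ∈ t, b1 j ≤ a1 p) ∧ (∃ q ∈ s, ∀ j ∈ t, b2 j ≤ a2 q)) ∨
      ((∃ p ∈ t, ∀ j ∈ s, a1 j ≤ b1 p) ∧ (∃ q ∈ t, ∀ j ∈ s, a2 j ≤ b2 q))) : False := by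
  have hsne : s.Nonempty := Finset.card_pos.mp (by omega)
  have htne : t.Nonempty := Finset.card_pos.mp (by omega)
  rcases hd with ⟨⟨p, hp, hpb⟩, q, hq, hqb⟩ | ⟨⟨p, hp, hpb⟩, q, hq, hqb⟩
  · obtain ⟨r, hr, hrm⟩ := s.exists_max_image a3 hsne
    have := dominate s t a1 a2 a3 b1 b2 b3 hs h.ha h.H1 h.H2 h.H3 p q r hp hq hr hpb hqb
    exact sum_case s t a3 b3 hs hst s3 r (h.ha r hr).2.2 hrm this.1 this.2
  · obtain ⟨r, hr, hrm⟩ := t.exists_max_image b3 htne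
    have := dominate t s b1 b2 b3 a1 a2 a3 (by omega) h.hb h.H2 h.H1 h.H4 p q r hp hq hr hpb hqb
    refine planar (s.card - 2) s t a1 a2 b1 b2 (by omega) (by omega)
      (fun i hi => ⟨(h.ha i hi).1, (h.ha i hi).2.1⟩)
      (fun i hi => ⟨(h.hb i hi).1, (h.hb i hi).2.1⟩) s1 s2 ?_
    intro i hi i' hi' hne j hj
    have e1 := this.2 i hi i' hi' hne
    have e2 := h.H1 i hi i' hi' hne j hj
    have e3 := hrm j hj
    have e4 := h.ha i hi
    have e5 := h.ha i' hi'
    omega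

theorem dichotomy {ι : Type} (s t : Finset ι) (a b : ι → ℤ) (hs : s.Nonempty) (ht : t.Nonempty) :
    (∃ p ∈ s, ∀ j ∈ t, b j ≤ a p) ∨ (∃ p ∈ t, ∀ j ∈ s, a j ≤ b p) := by
  obtain ⟨p, hp, hpm⟩ := s.exists_max_image a hs
  obtain ⟨q, hq, hqm⟩ := t.exists_max_image b ht
  rcases le_total (b q) (a p) with h | h
  · exact Or.inl ⟨p, hp, fun j hj => (hqm j hj).trans h⟩
  · exact Or.inr ⟨q, hq, fun j hj => (hpm j hj).trans h⟩

theorem NoMerge.contra {ι : Type} [DecidableEq ι] {s t : Finset ι} {a1 a2 a3 b1 b2 b3 : ι → ℤ}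
    (h : NoMerge s t a1 a2 a3 b1 b2 b3) (hs : 2 ≤ s.card) (hst : s.card = t.card)
    (s1 : ∑ j ∈ t, b1 j ≤ ∑ i ∈ s, a1 i)
    (s2 : ∑ j ∈ t, b2 j ≤ ∑ i ∈ s, a2 i)
    (s3 : ∑ j ∈ t, b3 j ≤ ∑ i ∈ s, a3 i) : False := by
  have hsne : s.Nonempty := Finset.card_pos.mp (by omega)
  have htne : t.Nonempty := Finset.card_pos.mp (by omega)
  have d1 := dichotomy s t a1 b1 hsne htne
  have d2 := dichotomy s t a2 b2 hsne htne
  have d3 := dichotomy s t a3 b3 hsne htne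
  have c1 := h.two_coords hs hst s1 s2 s3
  have c2 := h.rot.two_coords hs hst s2 s3 s1
  have c3 := h.rot.rot.two_coords hs hst s3 s1 s2
  rcases d1 with d1 | d1 <;> rcases d2 with d2 | d2
  · exact c1 (Or.inl ⟨d1, d2⟩)
  · rcases d3 with d3 | d3
    · exact c3 (Or.inl ⟨d3, d1⟩)
    · exact c2 (Or.inr ⟨d2, d3⟩)
  · rcases d3 with d3 | d3
    · exact c2 (Or.inl ⟨d2, d3⟩)
    · exact c3 (Or.inr ⟨d3, d1⟩)
  · exact c1 (Or.inr ⟨d1, d2⟩)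

/-- Abstract closure property of the 2-completion. -/
structure Closed2 (S : Set (Fin 3 → ℤ)) : Prop where
  nonneg : ∀ x ∈ S, ∀ j, 0 ≤ x j
  cl : ∀ x ∈ S, ∀ y ∈ S, ∀ z ∈ S, ∀ c ∈ S, ∀ d ∈ S, (∀ j, 0 ≤ (x + y + z - c - d) j) →
    x + y + z - c - d ∈ S

theorem Closed2.cl1 {S : Set (Fin 3 → ℤ)} (h : Closed2 S) {x y c : Fin 3 → ℤ}
    (hx : x ∈ S) (hy : y ∈ S) (hc : c ∈ S) (hn : ∀ j, 0 ≤ (x + y - c) j) : x + y - c ∈ S := by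
  have e : x + y + c - c - c = x + y - c := by abel
  rw [← e] at hn ⊢
  exact h.cl x hx y hy c hc c hc c hc hn

theorem sum_update_erase {ι : Type} [DecidableEq ι] (s : Finset ι) (x : ι → Fin 3 → ℤ)
    (i : ι) (hi : i ∈ s) (u : Fin 3 → ℤ) :
    ∑ k ∈ s, Function.update x i u k = ∑ k ∈ s, x k - x i + u := by
  rw [Finset.sum_update_of_mem hi, ← Finset.add_sum_erase s x hi, Finset.sdiff_singleton_eq_erase]
  abel

theorem update_mem {ι : Type} [DecidableEq ι] {S : Set (Fin 3 → ℤ)} (s : Finset ι)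
    (x : ι → Fin 3 → ℤ) (hx : ∀ i ∈ s, x i ∈ S)
    (i : ι) (u : Fin 3 → ℤ) (hu : u ∈ S) : ∀ k ∈ s, Function.update x i u k ∈ S := by
  intro k hk
  by_cases h : k = i
  · subst h; simpa using hu
  · simpa [h] using hx k hk

theorem reduce_main {ι : Type} [DecidableEq ι] {S : Set (Fin 3 → ℤ)} (hS : Closed2 S) (n : ℕ) :
    ∀ (s t : Finset ι) (x y : ι → Fin 3 → ℤ), s.card = n → t.card = n →
    (∀ i ∈ s, x i ∈ S) → (∀ i ∈ t, y i ∈ S) →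
    (∀ j, 0 ≤ (∑ i ∈ s, x i - ∑ i ∈ t, y i) j) →
    (∑ i ∈ s, x i - ∑ i ∈ t, y i) = 0 ∨
      ∃ p ∈ S, ∃ q ∈ S, ∑ i ∈ s, x i - ∑ i ∈ t, y i = p - q := by
  induction n using Nat.strong_induction_on with
  | _ n ih =>
  intro s t x y hs ht hx hy hv
  rcases Nat.lt_or_ge n 2 with hn | hn
  · interval_cases n
    · left
      rw [Finset.card_eq_zero.mp hs, Finset.card_eq_zero.mp ht]
      simp
    · right
      obtain ⟨i, rfl⟩ := Finset.card_eq_one.mp hs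
      obtain ⟨j, rfl⟩ := Finset.card_eq_one.mp ht
      exact ⟨x i, hx i (by simp), y j, hy j (by simp), by simp⟩
  by_contra hcon
  have key : NoMerge s t (fun i => x i 0) (fun i => x i 1) (fun i => x i 2)
      (fun i => y i 0) (fun i => y i 1) (fun i => y i 2) := by
    refine ⟨?_, ?_, ?_, ?_, ?_, ?_⟩
    · intro i hi
      have := hS.nonneg _ (hx i hi)
      exact ⟨this 0, this 1, this 2⟩
    · intro i hi
      have := hS.nonneg _ (hy i hi)
      exact ⟨this 0, this 1, this 2⟩
    · intro i hi i' hi' hne j hj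
      by_contra hc
      push Not at hc
      have hu : x i + x i' - y j ∈ S := by
        refine hS.cl1 (hx i hi) (hx i' hi') (hy j hj) ?_
        intro l
        fin_cases l <;> simp <;> omega
      have hi2 : i ∈ s.erase i' := Finset.mem_erase.mpr ⟨hne, hi⟩
      have e : ∑ k ∈ s.erase i', Function.update x i (x i + x i' - y j) k - ∑ k ∈ t.erase j, y k
          = ∑ k ∈ s, x k - ∑ k ∈ t, y k := by
        rw [sum_update_erase _ _ _ hi2, ← Finset.add_sum_erase s x hi',
          ← Finset.add_sum_erase t y hj]
        abel
      have := ih (n - 1) (by omega) (s.erase i') (t.erase j)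
        (Function.update x i (x i + x i' - y j)) y
        (by rw [Finset.card_erase_of_mem hi']; omega)
        (by rw [Finset.card_erase_of_mem hj]; omega)
        (update_mem _ _ (fun k hk => hx k (Finset.mem_of_mem_erase hk)) _ _ hu)
        (fun k hk => hy k (Finset.mem_of_mem_erase hk))
      rw [e] at this
      exact hcon (this hv)
    · intro i hi i' hi' hne j hj
      by_contra hc
      push Not at hc
      have hu : y i + y i' - x j ∈ S := by
        refine hS.cl1 (hy i hi) (hy i' hi') (hx j hj) ?_
        intro l
        fin_cases l <;> simp <;> omega
      have hi2 : i ∈ t.erase i' := Finset.mem_erase.mpr ⟨hne, hi⟩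
      have e : ∑ k ∈ s.erase j, x k - ∑ k ∈ t.erase i', Function.update y i (y i + y i' - x j) k
          = ∑ k ∈ s, x k - ∑ k ∈ t, y k := by
        rw [sum_update_erase _ _ _ hi2, ← Finset.add_sum_erase s x hj,
          ← Finset.add_sum_erase t y hi']
        abel
      have := ih (n - 1) (by omega) (s.erase j) (t.erase i')
        x (Function.update y i (y i + y i' - x j))
        (by rw [Finset.card_erase_of_mem hj]; omega)
        (by rw [Finset.card_erase_of_mem hi']; omega)
        (fun k hk => hx k (Finset.mem_of_mem_erase hk))
        (update_mem _ _ (fun k hk => hy k (Finset.mem_of_mem_erase hk)) _ _ hu)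
      rw [e] at this
      exact hcon (this hv)
    · intro i hi i' hi' i'' hi'' n1 n2 n3 j hj j' hj' n4
      by_contra hc
      push Not at hc
      have hu : x i + x i' + x i'' - y j - y j' ∈ S := by
        refine hS.cl _ (hx i hi) _ (hx i' hi') _ (hx i'' hi'') _ (hy j hj) _ (hy j' hj') ?_
        intro l
        fin_cases l <;> simp <;> omega
      have hi1 : i' ∈ s.erase i'' := Finset.mem_erase.mpr ⟨n3, hi'⟩
      have hi2 : i ∈ (s.erase i'').erase i' :=
        Finset.mem_erase.mpr ⟨n1, Finset.mem_erase.mpr ⟨n2, hi⟩⟩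
      have hj1 : j ∈ t.erase j' := Finset.mem_erase.mpr ⟨n4, hj⟩
      have e : ∑ k ∈ (s.erase i'').erase i',
            Function.update x i (x i + x i' + x i'' - y j - y j') k -
            ∑ k ∈ (t.erase j').erase j, y k
          = ∑ k ∈ s, x k - ∑ k ∈ t, y k := by
        rw [sum_update_erase _ _ _ hi2, ← Finset.add_sum_erase s x hi'',
          ← Finset.add_sum_erase _ x hi1,
          ← Finset.add_sum_erase t y hj', ← Finset.add_sum_erase _ y hj1]
        abel
      have := ih (n - 2) (by omega) ((s.erase i'').erase i') ((t.erase j').erase j)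
        (Function.update x i (x i + x i' + x i'' - y j - y j')) y
        (by rw [Finset.card_erase_of_mem hi1, Finset.card_erase_of_mem hi'']; omega)
        (by rw [Finset.card_erase_of_mem hj1, Finset.card_erase_of_mem hj']; omega)
        (update_mem _ _ (fun k hk => hx k (Finset.mem_of_mem_erase (Finset.mem_of_mem_erase hk)))
          _ _ hu)
        (fun k hk => hy k (Finset.mem_of_mem_erase (Finset.mem_of_mem_erase hk)))
      rw [e] at this
      exact hcon (this hv)
    · intro i hi i' hi' i'' hi'' n1 n2 n3 j hj j' hj' n4
      by_contra hc
      push Not at hc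
      have hu : y i + y i' + y i'' - x j - x j' ∈ S := by
        refine hS.cl _ (hy i hi) _ (hy i' hi') _ (hy i'' hi'') _ (hx j hj) _ (hx j' hj') ?_
        intro l
        fin_cases l <;> simp <;> omega
      have hi1 : i' ∈ t.erase i'' := Finset.mem_erase.mpr ⟨n3, hi'⟩
      have hi2 : i ∈ (t.erase i'').erase i' :=
        Finset.mem_erase.mpr ⟨n1, Finset.mem_erase.mpr ⟨n2, hi⟩⟩
      have hj1 : j ∈ s.erase j' := Finset.mem_erase.mpr ⟨n4, hj⟩
      have e : ∑ k ∈ (s.erase j').erase j, x k - ∑ k ∈ (t.erase i'').erase i',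
            Function.update y i (y i + y i' + y i'' - x j - x j') k
          = ∑ k ∈ s, x k - ∑ k ∈ t, y k := by
        rw [sum_update_erase _ _ _ hi2, ← Finset.add_sum_erase t y hi'',
          ← Finset.add_sum_erase _ y hi1,
          ← Finset.add_sum_erase s x hj', ← Finset.add_sum_erase _ x hj1]
        abel
      have := ih (n - 2) (by omega) ((s.erase j').erase j) ((t.erase i'').erase i')
        x (Function.update y i (y i + y i' + y i'' - x j - x j'))
        (by rw [Finset.card_erase_of_mem hj1, Finset.card_erase_of_mem hj']; omega)
        (by rw [Finset.card_erase_of_mem hi1, Finset.card_erase_of_mem hi'']; omega)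
        (fun k hk => hx k (Finset.mem_of_mem_erase (Finset.mem_of_mem_erase hk)))
        (update_mem _ _ (fun k hk => hy k (Finset.mem_of_mem_erase (Finset.mem_of_mem_erase hk)))
          _ _ hu)
      rw [e] at this
      exact hcon (this hv)
  have hv0 := hv 0
  have hv1 := hv 1
  have hv2 := hv 2
  simp only [Pi.sub_apply, Finset.sum_apply, sub_nonneg] at hv0 hv1 hv2
  exact key.contra (by omega) (by omega) hv0 hv1 hv2

/-- `v` is a difference of two sums of equally many points of `S`. -/
def RepDiff (S : Set (Fin 3 → ℤ)) (v : Fin 3 → ℤ) : Prop :=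
  ∃ (ι : Type) (s t : Finset ι) (x y : ι → Fin 3 → ℤ), s.card = t.card ∧
    (∀ i ∈ s, x i ∈ S) ∧ (∀ i ∈ t, y i ∈ S) ∧ v = ∑ i ∈ s, x i - ∑ i ∈ t, y i

/-- The subgroup of such differences. -/
def repGroup (S : Set (Fin 3 → ℤ)) : AddSubgroup (Fin 3 → ℤ) where
  carrier := {v | RepDiff S v}
  zero_mem' := ⟨Unit, ∅, ∅, fun _ => 0, fun _ => 0, rfl, by simp, by simp, by simp⟩
  neg_mem' := by
    rintro v ⟨ι, s, t, x, y, h, hx, hy, rfl⟩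
    exact ⟨ι, t, s, y, x, h.symm, hy, hx, by abel⟩
  add_mem' := by
    rintro v w ⟨ι, s, t, x, y, h, hx, hy, rfl⟩ ⟨ι', s', t', x', y', h', hx', hy', rfl⟩
    refine ⟨ι ⊕ ι', s.disjSum s', t.disjSum t', Sum.elim x x', Sum.elim y y', ?_, ?_, ?_, ?_⟩
    · simp [Finset.card_disjSum, h, h']
    · rintro (i | i) hi <;> simp at hi ⊢
      · exact hx i hi
      · exact hx' i hi
    · rintro (i | i) hi <;> simp at hi ⊢
      · exact hy i hi
      · exact hy' i hi
    · simp only [Finset.sum_disjSum, Sum.elim_inl, Sum.elim_inr]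
      abel

theorem sub_mem_repGroup {S : Set (Fin 3 → ℤ)} {p q : Fin 3 → ℤ} (hp : p ∈ S) (hq : q ∈ S) :
    p - q ∈ repGroup S :=
  ⟨Unit, {()}, {()}, fun _ => p, fun _ => q, rfl, by simpa using hp, by simpa using hq, by simp⟩

theorem closed_add {S : Set (Fin 3 → ℤ)} (hS : Closed2 S) {v α : Fin 3 → ℤ} (hα : α ∈ S)
    (hv : v ∈ repGroup S) (h0 : ∀ j, 0 ≤ v j) : α + v ∈ S := by
  obtain ⟨ι, s, t, x, y, h, hx, hy, rfl⟩ := hv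
  classical
  rcases reduce_main hS s.card s t x y rfl h.symm hx hy h0 with h1 | ⟨p, hp, q, hq, h1⟩
  · rw [h1, add_zero]; exact hα
  · rw [h1] at h0 ⊢
    rw [← add_sub_assoc]
    refine hS.cl1 hα hp hq ?_
    intro j
    have e1 := h0 j
    have e2 := hS.nonneg _ hα j
    simp only [Pi.sub_apply, Pi.add_apply] at e1 e2 ⊢
    omega

theorem mem_Eext {d : ℕ} {G : Set (Fin d → ℤ)} {x y z c e : Fin d → ℤ}
    (hx : x ∈ G) (hy : y ∈ G) (hz : z ∈ G) (hc : c ∈ G) (he : e ∈ G)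
    (hn : x + y + z - c - e ∈ NN d) : x + y + z - c - e ∈ Eext 2 G := by
  have cm : ∀ w ∈ G, w - x ∈ AddSubgroup.closure ((· - x) '' G) := fun w hw =>
    AddSubgroup.subset_closure ⟨w, hw, rfl⟩
  let m0 : (Fin d → ℤ) →₀ ℤ := Finsupp.single y 1 + Finsupp.single z 1
    - Finsupp.single c 1 - Finsupp.single e 1
  let F : Finset (Fin d → ℤ) := {y, z, c, e}
  have hm0 : ∀ w, m0 w = (if y = w then 1 else 0) + (if z = w then 1 else 0)
      - (if c = w then 1 else 0) - (if e = w then 1 else 0) := by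
    intro w
    simp only [m0, Finsupp.sub_apply, Finsupp.add_apply, Finsupp.single_apply]
  have hF : (m0.erase x).support ⊆ F := by
    intro w hw
    rw [Finsupp.support_erase, Finset.mem_erase, Finsupp.mem_support_iff, hm0] at hw
    by_contra hh
    simp only [F, Finset.mem_insert, Finset.mem_singleton, not_or] at hh
    apply hw.2
    rw [if_neg (Ne.symm hh.1), if_neg (Ne.symm hh.2.1), if_neg (Ne.symm hh.2.2.1),
      if_neg (Ne.symm hh.2.2.2)]
    rfl
  have hE : ∀ w, (m0.erase x) w = if w = x then 0 else m0 w := by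
    intro w
    by_cases h : w = x
    · subst h; simp
    · simp [h]
  have ext : ∀ f : (Fin d → ℤ) → ℤ → ℤ, (∀ w, f w 0 = 0) →
      ∑ w ∈ (m0.erase x).support, f w ((m0.erase x) w) = ∑ w ∈ F, f w ((m0.erase x) w) := by
    intro f hf
    apply Finset.sum_subset hF
    intro w _ hw
    rw [Finsupp.notMem_support_iff.mp hw, hf]
  have hyF : y ∈ F := by simp [F]
  have hzF : z ∈ F := by simp [F]
  have hcF : c ∈ F := by simp [F]
  have heF : e ∈ F := by simp [F]
  refine ⟨⟨?_, hn⟩, x, hx, m0.erase x, ?_, ?_, ?_, ?_⟩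
  · unfold cosetGen
    simp only [Set.mem_iUnion]
    refine ⟨x, hx, (y - x) + (z - x) - (c - x) - (e - x), ?_, ?_⟩
    · exact sub_mem (sub_mem (add_mem (cm y hy) (cm z hz)) (cm c hc)) (cm e he)
    · simp only
      abel
  · intro w hw
    have hw2 := hF hw
    rw [Finset.mem_coe, Finsupp.support_erase, Finset.mem_erase] at hw
    refine ⟨?_, hw.1⟩
    simp only [F, Finset.mem_insert, Finset.mem_singleton] at hw2
    rcases hw2 with rfl | rfl | rfl | rfl <;> assumption
  · have e1 : ∑ w ∈ (m0.erase x).support, (m0.erase x) w • (w - x)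
        = ∑ w ∈ F, (m0.erase x) w • (w - x) := by
      apply Finset.sum_subset hF
      intro w _ hw
      rw [Finsupp.notMem_support_iff.mp hw, zero_smul]
    have e2 : ∑ w ∈ F, (m0.erase x) w • (w - x) = ∑ w ∈ F, m0 w • (w - x) := by
      apply Finset.sum_congr rfl
      intro w _
      rw [hE]
      by_cases h : w = x
      · subst h; simp
      · simp [h]
    rw [e1, e2]
    simp only [hm0, sub_smul, add_smul, ite_smul, one_smul, zero_smul, Finset.sum_sub_distrib,
      Finset.sum_add_distrib, Finset.sum_ite_eq, if_pos hyF, if_pos hzF, if_pos hcF, if_pos heF]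
    abel
  · rw [ext (fun _ v => max v 0) (by simp)]
    calc ∑ w ∈ F, max ((m0.erase x) w) 0
        ≤ ∑ w ∈ F, ((if y = w then (1 : ℤ) else 0) + (if z = w then 1 else 0)) := by
          apply Finset.sum_le_sum
          intro w _
          rw [hE, hm0]
          split_ifs <;> simp
      _ = 2 := by
          simp only [Finset.sum_add_distrib, Finset.sum_ite_eq, if_pos hyF, if_pos hzF]
          rfl
      _ ≤ _ := by simp
  · rw [ext (fun _ v => max (-v) 0) (by simp)]
    calc ∑ w ∈ F, max (-((m0.erase x) w)) 0
        ≤ ∑ w ∈ F, ((if c = w then (1 : ℤ) else 0) + (if e = w then 1 else 0)) := by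
          apply Finset.sum_le_sum
          intro w _
          rw [hE, hm0]
          split_ifs <;> simp
      _ = 2 := by
          simp only [Finset.sum_add_distrib, Finset.sum_ite_eq, if_pos hcF, if_pos heF]
          rfl
      _ ≤ _ := by simp

theorem subset_Eext {d : ℕ} {G : Set (Fin d → ℤ)} (hG : G ⊆ NN d) : G ⊆ Eext 2 G := by
  intro x hx
  have e : x + x + x - x - x = x := by abel
  have := mem_Eext hx hx hx hx hx (by rw [e]; exact hG hx)
  rwa [e] at this

theorem EextIter_NN {d : ℕ} {G : Set (Fin d → ℤ)} (k : ℕ) : EextIter 2 k G ⊆ NN d := by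
  cases k with
  | zero => exact fun x hx => hx.1.2
  | succ k => exact fun x hx => hx.1.2

theorem EextIter_mono {d : ℕ} (G : Set (Fin d → ℤ)) :
    Monotone (fun k => EextIter 2 k G) :=
  monotone_nat_of_le_succ fun k => subset_Eext (EextIter_NN k)

theorem closed2_EextInf (G : Set (Fin 3 → ℤ)) : Closed2 (EextInf 2 G) := by
  constructor
  · intro x hx j
    obtain ⟨k, hk⟩ := Set.mem_iUnion.mp hx
    exact EextIter_NN k hk j
  · intro x hx y hy z hz c hc e he hn
    obtain ⟨k1, h1⟩ := Set.mem_iUnion.mp hx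
    obtain ⟨k2, h2⟩ := Set.mem_iUnion.mp hy
    obtain ⟨k3, h3⟩ := Set.mem_iUnion.mp hz
    obtain ⟨k4, h4⟩ := Set.mem_iUnion.mp hc
    obtain ⟨k5, h5⟩ := Set.mem_iUnion.mp he
    have mm := EextIter_mono G
    refine Set.mem_iUnion.mpr ⟨(k1 + k2 + k3 + k4 + k5) + 1, ?_⟩
    exact mem_Eext (mm (by omega) h1) (mm (by omega) h2) (mm (by omega) h3)
      (mm (by omega) h4) (mm (by omega) h5) hn

/-- For four affinely independent points in `ℕ₀³` and every `α ∈ T`, there is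
`β ∈ E_2^∞(T)`, `β ≠ α`, with all three coordinates of `β - α` positive. -/
theorem positive_point_dim_three (t₀ t₁ t₂ t₃ : Fin 3 → ℤ)
    (h₀ : t₀ ∈ NN 3) (h₁ : t₁ ∈ NN 3) (h₂ : t₂ ∈ NN 3) (h₃ : t₃ ∈ NN 3)
    (hind : LinearIndependent ℚ
      ![fun j => ((t₁ - t₀) j : ℚ), fun j => ((t₂ - t₀) j : ℚ),
        fun j => ((t₃ - t₀) j : ℚ)]) :
    ∀ α ∈ ({t₀, t₁, t₂, t₃} : Set (Fin 3 → ℤ)),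
      ∃ β ∈ EextInf 2 ({t₀, t₁, t₂, t₃} : Set (Fin 3 → ℤ)),
        β ≠ α ∧ ∀ j, 0 < (β - α) j := by
  set T : Set (Fin 3 → ℤ) := {t₀, t₁, t₂, t₃} with hT
  have hTN : T ⊆ NN 3 := by
    intro x hx
    simp only [hT, Set.mem_insert_iff, Set.mem_singleton_iff] at hx
    rcases hx with rfl | rfl | rfl | rfl <;> assumption
  have hTS : T ⊆ EextInf 2 T := fun x hx =>
    Set.mem_iUnion.mpr ⟨0, subset_Eext hTN hx⟩
  have hS := closed2_EextInf T
  let A : Matrix (Fin 3) (Fin 3) ℤ := Matrix.of ![t₁ - t₀, t₂ - t₀, t₃ - t₀]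
  have hdet : A.det ≠ 0 := by
    have h1 : LinearIndependent ℚ (A.map (Int.castRingHom ℚ)).row := by
      convert hind using 1
      funext i
      fin_cases i <;> rfl
    have h2 := Matrix.linearIndependent_rows_iff_isUnit.mp h1
    rw [Matrix.isUnit_iff_isUnit_det, isUnit_iff_ne_zero] at h2
    intro h0
    apply h2
    have := (Int.castRingHom ℚ).map_det A
    rw [h0] at this
    simpa using this.symm
  let w : Fin 3 → ℤ := Matrix.vecMul (fun _ => A.det) A.adjugate
  let v : Fin 3 → ℤ := Matrix.vecMul w A
  have hv : v = fun _ => A.det * A.det := by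
    simp only [v, w, Matrix.vecMul_vecMul, Matrix.adjugate_mul, Matrix.vecMul_smul,
      Matrix.vecMul_one]
    rfl
  have hvpos : ∀ j, 0 < v j := by
    intro j
    rw [hv]
    exact mul_self_pos.mpr hdet
  have hvsum : v = w 0 • (t₁ - t₀) + w 1 • (t₂ - t₀) + w 2 • (t₃ - t₀) := by
    funext j
    have e : v j = ∑ i, w i * A i j := rfl
    rw [e, Fin.sum_univ_three]
    rfl
  have m0 : t₀ ∈ EextInf 2 T := hTS (by simp [hT])
  have m1 : t₁ ∈ EextInf 2 T := hTS (by simp [hT])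
  have m2 : t₂ ∈ EextInf 2 T := hTS (by simp [hT])
  have m3 : t₃ ∈ EextInf 2 T := hTS (by simp [hT])
  have hvG : v ∈ repGroup (EextInf 2 T) := by
    rw [hvsum]
    exact add_mem (add_mem (zsmul_mem (sub_mem_repGroup m1 m0) _)
      (zsmul_mem (sub_mem_repGroup m2 m0) _)) (zsmul_mem (sub_mem_repGroup m3 m0) _)
  intro α hα
  refine ⟨α + v, closed_add hS (hTS hα) hvG (fun j => (hvpos j).le), ?_, ?_⟩
  · intro h
    have e1 := congrFun h 0
    have e2 := hvpos 0
    simp only [Pi.add_apply] at e1 e2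
    omega
  · intro j
    simpa using hvpos j

end
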